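/- In the Riemannian (full-rank) case of the canonical structural equations, i.e. with C₁ = 0 and C₂ = I_n: let n ≥ 1, let R : ℝ → Mat_{n×n}(ℝ) be a C^∞ family of symmetric matrices, and let A, B, C, D : ℝ → Mat_{n×n}(ℝ) be the unique solution of d/dt [A B; C D] = [0 −I_n; R(t) 0] · [A B; C D] with A(0) = D(0) = I_n and B(0) = C(0) = 0. Then B(t) is invertible for all sufficiently small t > 0, and as t → 0⁺ one has d/dt ( B(t)⁻¹ A(t) ) = (1/t²) I_n + (1/3) R(0) + O(t). (This expresses that in the Riemannian case the singular coefficient 𝓘_λ equals the identity and the zeroth-order invariant 𝒬⁰_λ equals one third of the directional curvature R(·,γ̇)γ̇.) -/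

import Mathlib

open Matrix Filter Topology Asymptotics

noncomputable section

/-!
Put `r = R(0)`. Integrating the structural equations term by term near `t = 0` gives
`A, D = 1 - t²r/2 + O(t³)`, `tC = t²r + O(t³)` and `t⁻¹B = -1 + t²r/6 + O(t³)`. The last expansion
shows that `B` is invertible for small `t ≠ 0` and, by the Neumann series,
`tB⁻¹ = -1 - t²r/6 + O(t³)`. Multiplying these expansions in the identity
`t² d/dt (B⁻¹A) = tB⁻¹ (D (tB⁻¹ A) - tC)` gives `1 + t²r/3 + O(t³)`; it remains to divide by `t²`.
Since only products and inverses occur, the argument takes place in a Banach algebra.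
-/

section Antiderivative

variable {E : Type*} [NormedAddCommGroup E] [NormedSpace ℝ E]

theorem isBigO_pow_succ_of_hasDerivAt {f f' : ℝ → E} {k : ℕ} (h0 : f 0 = 0)
    (hf : ∀ᶠ t in 𝓝 0, HasDerivAt f (f' t) t) (hO : f' =O[𝓝 0] fun t : ℝ ↦ t ^ k) :
    f =O[𝓝 0] fun t : ℝ ↦ t ^ (k + 1) := by
  obtain ⟨c, hc, hbound⟩ := hO.exists_nonneg
  obtain ⟨ε, hε, hball⟩ := Metric.eventually_nhds_iff_ball.1 (hf.and hbound.bound)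
  refine IsBigO.of_bound c ?_
  filter_upwards [Metric.ball_mem_nhds (0 : ℝ) hε] with t ht
  have hle : ∀ s ∈ Set.uIcc 0 t, |s| ≤ |t| := fun s hs ↦ by
    simpa using Set.abs_sub_left_of_mem_uIcc hs
  have hmem : ∀ s ∈ Set.uIcc 0 t, s ∈ Metric.ball 0 ε := fun s hs ↦
    mem_ball_zero_iff.2 ((hle s hs).trans_lt (mem_ball_zero_iff.1 ht))
  have hderiv : ∀ s ∈ Set.uIcc 0 t, ‖f' s‖ ≤ c * |t| ^ k := fun s hs ↦
    calc ‖f' s‖ ≤ c * ‖s ^ k‖ := (hball s (hmem s hs)).2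
      _ = c * |s| ^ k := by rw [norm_pow, Real.norm_eq_abs]
      _ ≤ c * |t| ^ k := by gcongr c * ?_ ^ k; exact hle s hs
  have hmvt := (convex_uIcc 0 t).norm_image_sub_le_of_norm_hasDerivWithin_le
    (fun s hs ↦ (hball s (hmem s hs)).1.hasDerivWithinAt) hderiv Set.left_mem_uIcc
    Set.right_mem_uIcc
  simpa [h0, pow_succ, mul_assoc] using hmvt

theorem isBigO_sub_smul_of_hasDerivAt {f f' : ℝ → E} {x : E} {k m : ℕ}
    (hf : ∀ᶠ t in 𝓝 0, HasDerivAt f (f' t) t)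
    (hO : (fun t ↦ f' t - t ^ k • x) =O[𝓝 0] fun t : ℝ ↦ t ^ m) :
    (fun t ↦ f t - f 0 - (t ^ (k + 1) / (k + 1)) • x) =O[𝓝 0] fun t : ℝ ↦ t ^ (m + 1) := by
  refine isBigO_pow_succ_of_hasDerivAt (by simp) ?_ hO
  have hpow (t : ℝ) : HasDerivAt (fun t : ℝ ↦ t ^ (k + 1) / (k + 1)) (t ^ k) t := by
    refine ((hasDerivAt_pow (k + 1) t).div_const _).congr_deriv ?_
    push_cast
    field_simp
  filter_upwards [hf] with t ht using (ht.sub_const _).sub ((hpow t).smul_const x)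

theorem isBigO_inv_pow_smul {f : ℝ → E} {k m : ℕ} (hf : f =O[𝓝[≠] 0] fun t : ℝ ↦ t ^ (k + m)) :
    (fun t ↦ (t ^ k)⁻¹ • f t) =O[𝓝[≠] 0] fun t : ℝ ↦ t ^ m := by
  refine ((isBigO_refl (fun t : ℝ ↦ (t ^ k)⁻¹) _).smul hf).congr' .rfl ?_
  filter_upwards [self_mem_nhdsWithin] with t ht
  rw [smul_eq_mul, pow_add, inv_mul_cancel_left₀ (pow_ne_zero k ht)]

end Antiderivative

section QuadraticExpansion

variable {𝔸 : Type*} [NormedRing 𝔸] [NormedAlgebra ℝ 𝔸] {f g : ℝ → 𝔸} {a b x y : 𝔸}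

/-- The second-order expansion `f t = a + t² x + O(t³)` as `t → 0`, `t ≠ 0`. The punctured
neighborhood admits functions such as `t⁻¹ B(t)` that have no meaning at `t = 0`. -/
def HasQuadraticExpansion (f : ℝ → 𝔸) (a x : 𝔸) : Prop :=
  (fun t ↦ f t - (a + t ^ 2 • x)) =O[𝓝[≠] 0] fun t : ℝ ↦ t ^ 3

namespace HasQuadraticExpansion

theorem isBigO_sub (hf : HasQuadraticExpansion f a x) :
    (fun t ↦ f t - a) =O[𝓝[≠] 0] fun t : ℝ ↦ t ^ 2 := by
  have hcubic : (fun t : ℝ ↦ t ^ 3) =O[𝓝[≠] 0] fun t ↦ t ^ 2 :=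
    (isLittleO_pow_pow (by norm_num)).isBigO.mono nhdsWithin_le_nhds
  have hsquare : (fun t : ℝ ↦ t ^ 2 • x) =O[𝓝[≠] 0] fun t ↦ t ^ 2 := by
    simpa using (isBigO_refl (fun t : ℝ ↦ t ^ 2) (𝓝[≠] 0)).smul (isBigO_const_one ℝ x _)
  exact ((IsBigO.trans hf hcubic).add hsquare).congr_left fun t ↦ by abel

theorem tendsto (hf : HasQuadraticExpansion f a x) : Tendsto f (𝓝[≠] 0) (𝓝 a) := by
  have hsquare : Tendsto (fun t : ℝ ↦ t ^ 2) (𝓝[≠] 0) (𝓝 0) :=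
    ((continuous_pow 2).tendsto' 0 0 (by simp)).mono_left nhdsWithin_le_nhds
  exact tendsto_sub_nhds_zero_iff.1 (hf.isBigO_sub.trans_tendsto hsquare)

theorem sub (hf : HasQuadraticExpansion f a x) (hg : HasQuadraticExpansion g b y) :
    HasQuadraticExpansion (fun t ↦ f t - g t) (a - b) (x - y) :=
  (IsBigO.sub hf hg).congr_left fun t ↦ by simp only [smul_sub]; abel

theorem mul (hf : HasQuadraticExpansion f a x) (hg : HasQuadraticExpansion g b y) :
    HasQuadraticExpansion (fun t ↦ f t * g t) (a * b) (a * y + x * b) := by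
  have hsquares : (fun t ↦ (f t - a) * (g t - b)) =O[𝓝[≠] 0] fun t : ℝ ↦ t ^ 3 := by
    refine (hf.isBigO_sub.mul hg.isBigO_sub).trans ?_
    simp only [← pow_add]
    exact (isLittleO_pow_pow (by norm_num)).isBigO.mono nhdsWithin_le_nhds
  have hleft := (isBigO_const_mul_self a (fun t ↦ g t - (b + t ^ 2 • y)) _).trans hg
  have hright : (fun t ↦ (f t - (a + t ^ 2 • x)) * b) =O[𝓝[≠] 0] fun t : ℝ ↦ t ^ 3 := by
    simpa using IsBigO.mul hf (isBigO_const_one ℝ b _)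
  refine ((hsquares.add hleft).add hright).congr_left fun t ↦ ?_
  simp only [sub_mul, mul_sub, add_mul, mul_add, smul_add, smul_mul_assoc, mul_smul_comm]
  abel

theorem ringInverse [HasSummableGeomSeries 𝔸] {u : 𝔸ˣ} (hf : HasQuadraticExpansion f u x) :
    HasQuadraticExpansion (fun t ↦ Ring.inverse (f t)) ↑u⁻¹ (-(↑u⁻¹ * x * ↑u⁻¹)) := by
  have hlim : Tendsto (fun t ↦ f t - u) (𝓝[≠] 0) (𝓝 0) :=
    tendsto_sub_nhds_zero_iff.2 hf.tendsto
  have hneumann : (fun t ↦ Ring.inverse (f t) - ↑u⁻¹ + ↑u⁻¹ * (f t - u) * ↑u⁻¹)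
      =O[𝓝[≠] 0] fun t : ℝ ↦ t ^ 3 := by
    have hsquare : (fun t ↦ ‖f t - u‖ ^ 2) =O[𝓝[≠] 0] fun t : ℝ ↦ t ^ 3 := by
      refine (hf.isBigO_sub.norm_left.pow 2).trans ?_
      simp only [← pow_mul]
      exact (isLittleO_pow_pow (by norm_num)).isBigO.mono nhdsWithin_le_nhds
    refine IsBigO.trans ?_ hsquare
    simpa [Function.comp_def] using
      (NormedRing.inverse_add_norm_diff_second_order u).comp_tendsto hlim
  have hconj : (fun t ↦ ↑u⁻¹ * (f t - (u + t ^ 2 • x)) * ↑u⁻¹) =O[𝓝[≠] 0] fun t : ℝ ↦ t ^ 3 := by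
    simpa using ((isBigO_const_mul_self (↑u⁻¹ : 𝔸) _ _).trans hf).mul
      (isBigO_const_one ℝ (↑u⁻¹ : 𝔸) _)
  refine (hneumann.sub hconj).congr_left fun t ↦ ?_
  simp only [mul_sub, sub_mul, mul_add, add_mul, mul_smul_comm, smul_mul_assoc, smul_neg]
  abel

theorem isBigO_inv_sq_smul_sub (hf : HasQuadraticExpansion f a x) :
    (fun t ↦ (t ^ 2)⁻¹ • f t - ((t ^ 2)⁻¹ • a + x)) =O[𝓝[≠] 0] fun t : ℝ ↦ t := by
  refine (isBigO_inv_pow_smul (k := 2) (m := 1) hf).congr' ?_ (by simp only [pow_one]; rfl)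
  filter_upwards [self_mem_nhdsWithin] with t ht
  rw [smul_sub, smul_add, inv_smul_smul₀ (pow_ne_zero 2 ht)]

end HasQuadraticExpansion

end QuadraticExpansion

theorem ringInverse_smul {𝕜 𝔸 : Type*} [Field 𝕜] [Ring 𝔸] [Algebra 𝕜 𝔸] (c : 𝕜) (x : 𝔸) :
    Ring.inverse (c • x) = c⁻¹ • Ring.inverse x := by
  rcases eq_or_ne c 0 with rfl | hc
  · simp only [zero_smul, Ring.inverse_zero, _root_.inv_zero]
  by_cases hx : IsUnit x
  · obtain ⟨u, rfl⟩ := hx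
    rw [Ring.inverse_unit]
    exact Ring.inverse_unit (Units.mk0 c hc • u)
  · have hcx : ¬IsUnit (c • x) := mt (isUnit_smul_iff (Units.mk0 c hc) x).1 hx
    rw [Ring.inverse_non_unit _ hx, Ring.inverse_non_unit _ hcx, smul_zero]

theorem hasDerivAt_ringInverse_mul {𝕜 𝔸 : Type*} [NontriviallyNormedField 𝕜] [NormedRing 𝔸]
    [NormedAlgebra 𝕜 𝔸] [HasSummableGeomSeries 𝔸] {f g : 𝕜 → 𝔸} {f' g' : 𝔸} {t : 𝕜}
    (hf : HasDerivAt f f' t) (hg : HasDerivAt g g' t) (ht : IsUnit (f t)) :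
    HasDerivAt (fun s ↦ Ring.inverse (f s) * g s)
      (Ring.inverse (f t) * (g' - f' * (Ring.inverse (f t) * g t))) t := by
  obtain ⟨u, hu⟩ := ht
  have hinv : HasDerivAt (fun s ↦ Ring.inverse (f s)) (-(↑u⁻¹ * f' * ↑u⁻¹)) t :=
    (hu ▸ hasFDerivAt_ringInverse (𝕜 := 𝕜) u).comp_hasDerivAt t hf
  refine (hinv.mul hg).congr_deriv ?_
  rw [← hu, Ring.inverse_unit]
  noncomm_ring

section JacobiPair

variable {𝔸 : Type*} [NormedRing 𝔸] [NormedAlgebra ℝ 𝔸] {R X Y : ℝ → 𝔸}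

/-- A solution near `t = 0` of the structural equations `Ẋ = -Y`, `Ẏ = R X`, that is, of the Jacobi
equation `Ẍ = -R X` as a first-order system. The blocks `(A, C)` and `(B, D)` of the matrix Cauchy
problem are the solutions with initial values `(1, 0)` and `(0, 1)`. -/
structure IsJacobiPair (R X Y : ℝ → 𝔸) : Prop where
  hasDerivAt_left : ∀ᶠ t in 𝓝 0, HasDerivAt X (-Y t) t
  hasDerivAt_right : ∀ᶠ t in 𝓝 0, HasDerivAt Y (R t * X t) t

namespace IsJacobiPair

theorem isBigO_mul_sub (h : IsJacobiPair R X Y) (hR : (fun t ↦ R t - R 0) =O[𝓝 0] fun t ↦ t) :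
    (fun t ↦ R t * X t - R 0 * X 0) =O[𝓝 0] fun t : ℝ ↦ t := by
  have hX := h.hasDerivAt_left.self_of_nhds
  have hR_part : (fun t ↦ (R t - R 0) * X t) =O[𝓝 0] fun t : ℝ ↦ t := by
    simpa using hR.mul (hX.continuousAt.isBigO_one ℝ)
  have hX_part : (fun t ↦ R 0 * (X t - X 0)) =O[𝓝 0] fun t : ℝ ↦ t :=
    (isBigO_const_mul_self (R 0) _ _).trans (by simpa using hX.isBigO_sub)
  exact (hR_part.add hX_part).congr_left fun t ↦ by noncomm_ring

theorem isBigO_right_sub (h : IsJacobiPair R X Y) (hR : (fun t ↦ R t - R 0) =O[𝓝 0] fun t ↦ t) :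
    (fun t ↦ Y t - Y 0 - t • (R 0 * X 0)) =O[𝓝 0] fun t : ℝ ↦ t ^ 2 := by
  simpa using isBigO_sub_smul_of_hasDerivAt (x := R 0 * X 0) (k := 0) (m := 1)
    h.hasDerivAt_right (by simpa using h.isBigO_mul_sub hR)

theorem isBigO_left_sub (h : IsJacobiPair R X Y) :
    (fun t ↦ X t - X 0 + t • Y 0) =O[𝓝 0] fun t : ℝ ↦ t ^ 2 := by
  have hY : (fun t ↦ Y t - Y 0) =O[𝓝 0] fun t : ℝ ↦ t := by
    simpa using h.hasDerivAt_right.self_of_nhds.isBigO_sub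
  simpa using isBigO_sub_smul_of_hasDerivAt (x := -Y 0) (k := 0) (m := 1)
    h.hasDerivAt_left (by simpa [neg_add_eq_sub] using hY.neg_left)

theorem left_expansion_of_right_zero (h : IsJacobiPair R X Y)
    (hR : (fun t ↦ R t - R 0) =O[𝓝 0] fun t ↦ t) (hY0 : Y 0 = 0) :
    HasQuadraticExpansion X (X 0) (-(1 / 2 : ℝ) • (R 0 * X 0)) := by
  have hX' : (fun t ↦ -Y t - t ^ 1 • -(R 0 * X 0)) =O[𝓝 0] fun t : ℝ ↦ t ^ 2 :=
    (h.isBigO_right_sub hR).neg_left.congr_left fun t ↦ by rw [hY0]; module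
  refine ((isBigO_sub_smul_of_hasDerivAt h.hasDerivAt_left hX').mono
    nhdsWithin_le_nhds).congr_left fun t ↦ ?_
  push_cast
  module

theorem isBigO_right_sub_of_left_zero (h : IsJacobiPair R X Y)
    (hR : (fun t ↦ R t - R 0) =O[𝓝 0] fun t ↦ t) (hX0 : X 0 = 0) :
    (fun t ↦ Y t - (Y 0 + t ^ 2 • (-(1 / 2 : ℝ) • (R 0 * Y 0)))) =O[𝓝 0] fun t : ℝ ↦ t ^ 3 := by
  have hX : (fun t ↦ X t + t • Y 0) =O[𝓝 0] fun t : ℝ ↦ t ^ 2 := by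
    simpa [hX0] using h.isBigO_left_sub
  have hR_part : (fun t ↦ (R t - R 0) * X t) =O[𝓝 0] fun t : ℝ ↦ t ^ 2 := by
    simpa [hX0, pow_two] using hR.mul h.hasDerivAt_left.self_of_nhds.isBigO_sub
  have hX_part := (isBigO_const_mul_self (R 0) _ _).trans hX
  have hY' : (fun t ↦ R t * X t - t ^ 1 • -(R 0 * Y 0)) =O[𝓝 0] fun t : ℝ ↦ t ^ 2 :=
    (hR_part.add hX_part).congr_left fun t ↦ by
      simp only [sub_mul, mul_add, mul_smul_comm]
      module
  refine (isBigO_sub_smul_of_hasDerivAt h.hasDerivAt_right hY').congr_left fun t ↦ ?_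
  push_cast
  module

theorem right_expansion_of_left_zero (h : IsJacobiPair R X Y)
    (hR : (fun t ↦ R t - R 0) =O[𝓝 0] fun t ↦ t) (hX0 : X 0 = 0) :
    HasQuadraticExpansion Y (Y 0) (-(1 / 2 : ℝ) • (R 0 * Y 0)) :=
  (h.isBigO_right_sub_of_left_zero hR hX0).mono nhdsWithin_le_nhds

theorem isBigO_left_sub_of_left_zero (h : IsJacobiPair R X Y)
    (hR : (fun t ↦ R t - R 0) =O[𝓝 0] fun t ↦ t) (hX0 : X 0 = 0) :
    (fun t ↦ X t + t • Y 0 - (t ^ 3 / 6) • (R 0 * Y 0)) =O[𝓝 0] fun t : ℝ ↦ t ^ 4 := by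
  have hderiv : ∀ᶠ t in 𝓝 0, HasDerivAt (fun t ↦ X t + t • Y 0) (-Y t + Y 0) t := by
    filter_upwards [h.hasDerivAt_left] with t ht
    simpa using ht.fun_add ((hasDerivAt_id' t).smul_const (Y 0))
  have hO : (fun t ↦ -Y t + Y 0 - t ^ 2 • ((1 / 2 : ℝ) • (R 0 * Y 0)))
      =O[𝓝 0] fun t : ℝ ↦ t ^ 3 :=
    (h.isBigO_right_sub_of_left_zero hR hX0).neg_left.congr_left fun t ↦ by module
  refine (isBigO_sub_smul_of_hasDerivAt hderiv hO).congr_left fun t ↦ ?_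
  simp only [hX0]
  push_cast
  module

theorem inv_smul_left_expansion_of_left_zero (h : IsJacobiPair R X Y)
    (hR : (fun t ↦ R t - R 0) =O[𝓝 0] fun t ↦ t) (hX0 : X 0 = 0) :
    HasQuadraticExpansion (fun t ↦ t⁻¹ • X t) (-Y 0) ((1 / 6 : ℝ) • (R 0 * Y 0)) := by
  have hX := (h.isBigO_left_sub_of_left_zero hR hX0).mono (nhdsWithin_le_nhds (s := {0}ᶜ))
  refine (isBigO_inv_pow_smul (k := 1) (m := 3) hX).congr' ?_ .rfl
  filter_upwards [self_mem_nhdsWithin] with t ht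
  have ht : t ≠ 0 := ht
  match_scalars <;> field_simp

theorem smul_right_expansion_of_right_zero (h : IsJacobiPair R X Y)
    (hR : (fun t ↦ R t - R 0) =O[𝓝 0] fun t ↦ t) (hY0 : Y 0 = 0) :
    HasQuadraticExpansion (fun t ↦ t • Y t) 0 (R 0 * X 0) := by
  refine (((isBigO_refl (fun t : ℝ ↦ t) _).smul (h.isBigO_right_sub hR)).mono
    nhdsWithin_le_nhds).congr (fun t ↦ ?_) fun t ↦ ?_
  · rw [hY0]
    module
  · rw [smul_eq_mul, pow_succ' t 2]

theorem eventually_isUnit_left [HasSummableGeomSeries 𝔸] (h : IsJacobiPair R X Y)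
    (hR : (fun t ↦ R t - R 0) =O[𝓝 0] fun t ↦ t) (hX0 : X 0 = 0) (hY0 : IsUnit (Y 0)) :
    ∀ᶠ t in 𝓝[≠] 0, IsUnit (X t) := by
  have hlim := (h.inv_smul_left_expansion_of_left_zero hR hX0).tendsto
  filter_upwards [hlim.eventually (Units.isOpen.mem_nhds hY0.neg), self_mem_nhdsWithin]
    with t ht ht0
  exact (isUnit_smul_iff (Units.mk0 t⁻¹ (inv_ne_zero ht0)) (X t)).1 ht

theorem smul_ringInverse_left_expansion [HasSummableGeomSeries 𝔸] (h : IsJacobiPair R X Y)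
    (hR : (fun t ↦ R t - R 0) =O[𝓝 0] fun t ↦ t) (hX0 : X 0 = 0) (hY0 : Y 0 = 1) :
    HasQuadraticExpansion (fun t ↦ t • Ring.inverse (X t)) (-1) (-(1 / 6 : ℝ) • R 0) := by
  have hX : HasQuadraticExpansion (fun t ↦ t⁻¹ • X t) ↑(-1 : 𝔸ˣ) ((1 / 6 : ℝ) • R 0) := by
    simpa [hY0] using h.inv_smul_left_expansion_of_left_zero hR hX0
  simpa [ringInverse_smul] using hX.ringInverse

theorem eventually_hasDerivAt_ringInverse_mul [HasSummableGeomSeries 𝔸] {A B C D : ℝ → 𝔸}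
    (hAC : IsJacobiPair R A C) (hBD : IsJacobiPair R B D)
    (hunit : ∀ᶠ t in 𝓝[≠] 0, IsUnit (B t)) :
    ∀ᶠ t in 𝓝[≠] 0, HasDerivAt (fun s ↦ Ring.inverse (B s) * A s)
      (Ring.inverse (B t) * (D t * (Ring.inverse (B t) * A t) - C t)) t := by
  filter_upwards [hunit, hAC.hasDerivAt_left.filter_mono nhdsWithin_le_nhds,
    hBD.hasDerivAt_left.filter_mono nhdsWithin_le_nhds] with t ht hA hB
  refine (hasDerivAt_ringInverse_mul hB hA ht).congr_deriv ?_
  rw [neg_mul, sub_neg_eq_add, neg_add_eq_sub]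

theorem sq_smul_deriv_expansion [HasSummableGeomSeries 𝔸] {A B C D : ℝ → 𝔸}
    (hAC : IsJacobiPair R A C) (hBD : IsJacobiPair R B D)
    (hR : (fun t ↦ R t - R 0) =O[𝓝 0] fun t ↦ t)
    (hA0 : A 0 = 1) (hB0 : B 0 = 0) (hC0 : C 0 = 0) (hD0 : D 0 = 1) :
    HasQuadraticExpansion
      (fun t ↦ t ^ 2 • (Ring.inverse (B t) * (D t * (Ring.inverse (B t) * A t) - C t)))
      1 ((1 / 3 : ℝ) • R 0) := by
  have hA : HasQuadraticExpansion A 1 (-(1 / 2 : ℝ) • R 0) := by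
    simpa only [hA0, mul_one] using hAC.left_expansion_of_right_zero hR hC0
  have hC : HasQuadraticExpansion (fun t ↦ t • C t) 0 (R 0) := by
    simpa only [hA0, mul_one] using hAC.smul_right_expansion_of_right_zero hR hC0
  have hD : HasQuadraticExpansion D 1 (-(1 / 2 : ℝ) • R 0) := by
    simpa only [hD0, mul_one] using hBD.right_expansion_of_left_zero hR hB0
  have hBinv := hBD.smul_ringInverse_left_expansion hR hB0 hD0
  have hmul := hBinv.mul ((hD.mul (hBinv.mul hA)).sub hC)
  convert hmul using 1
  · ext t
    simp only [smul_mul_assoc, mul_smul_comm, mul_sub, smul_sub, smul_smul, pow_two]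
  · simp
  · simp only [mul_one, one_mul, neg_mul, mul_neg, sub_zero]
    module

end IsJacobiPair

end JacobiPair

theorem riemannian_Q0_is_third_of_curvature_general {𝔸 : Type*} [NormedRing 𝔸] [NormedAlgebra ℝ 𝔸]
    [HasSummableGeomSeries 𝔸] {R A B C D : ℝ → 𝔸}
    (hR : (fun t ↦ R t - R 0) =O[𝓝 0] fun t ↦ t)
    (hAC : IsJacobiPair R A C) (hBD : IsJacobiPair R B D)
    (hA0 : A 0 = 1) (hB0 : B 0 = 0) (hC0 : C 0 = 0) (hD0 : D 0 = 1) :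
    (∀ᶠ t in 𝓝[≠] 0, IsUnit (B t) ∧ DifferentiableAt ℝ (fun s ↦ Ring.inverse (B s) * A s) t) ∧
      (fun t ↦ deriv (fun s ↦ Ring.inverse (B s) * A s) t -
        ((1 / t ^ 2) • (1 : 𝔸) + (1 / 3 : ℝ) • R 0)) =O[𝓝[≠] 0] fun t : ℝ ↦ t := by
  have hunit := hBD.eventually_isUnit_left hR hB0 (hD0 ▸ isUnit_one)
  have hderiv := hAC.eventually_hasDerivAt_ringInverse_mul hBD hunit
  refine ⟨hunit.and (hderiv.mono fun t ht ↦ ht.differentiableAt), ?_⟩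
  have hexp := hAC.sq_smul_deriv_expansion hBD hR hA0 hB0 hC0 hD0
  refine hexp.isBigO_inv_sq_smul_sub.congr' ?_ .rfl
  filter_upwards [hderiv, self_mem_nhdsWithin] with t ht ht0
  rw [ht.deriv, inv_smul_smul₀ (pow_ne_zero 2 ht0), one_div (t ^ 2)]

section Matrix

theorem hasDerivAt_matrix_iff {m n : Type*} [Finite m] [Finite n] {F : ℝ → Matrix m n ℝ}
    {F' : Matrix m n ℝ} {t : ℝ} :
    HasDerivAt F F' t ↔ ∀ i j, HasDerivAt (fun s ↦ F s i j) (F' i j) t := by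
  cases nonempty_fintype m
  cases nonempty_fintype n
  exact hasDerivAt_pi.trans (forall_congr' fun _ ↦ hasDerivAt_pi)

open scoped Matrix.Norms.Operator

variable {n : Type*} [Fintype n]

theorem isBigO_sub_of_differentiableAt_entry {F : ℝ → Matrix n n ℝ} {t₀ : ℝ}
    (hF : ∀ i j, DifferentiableAt ℝ (fun t ↦ F t i j) t₀) :
    (fun t ↦ F t - F t₀) =O[𝓝 t₀] fun t ↦ t - t₀ :=
  (hasDerivAt_matrix_iff (F' := of fun i j ↦ deriv (fun t ↦ F t i j) t₀).2
    fun i j ↦ (hF i j).hasDerivAt).isBigO_sub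

theorem isBigO_deriv_entry_sub {F G : ℝ → Matrix n n ℝ} {g : ℝ → ℝ} {l : Filter ℝ}
    (hF : ∀ᶠ t in l, DifferentiableAt ℝ F t) (hO : (fun t ↦ deriv F t - G t) =O[l] g) (i j : n) :
    (fun t ↦ deriv (fun s ↦ F s i j) t - G t i j) =O[l] g := by
  have hentry := (LinearMap.toContinuousLinearMap (entryLinearMap ℝ ℝ i j)).isBigO_comp
    (fun t ↦ deriv F t - G t) l
  refine (hentry.trans hO).congr' ?_ .rfl
  filter_upwards [hF] with t ht
  rw [(hasDerivAt_matrix_iff.1 ht.hasDerivAt i j).deriv]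
  rfl

theorem isJacobiPair_of_hasDerivAt_entry [DecidableEq n] {R X Y : ℝ → Matrix n n ℝ}
    (hX : ∀ t i j, HasDerivAt (fun s ↦ X s i j) ((-(Y t)) i j) t)
    (hY : ∀ t i j, HasDerivAt (fun s ↦ Y s i j) ((R t * X t) i j) t) : IsJacobiPair R X Y :=
  ⟨.of_forall fun t ↦ hasDerivAt_matrix_iff.2 (hX t),
    .of_forall fun t ↦ hasDerivAt_matrix_iff.2 (hY t)⟩

end Matrix

/-- Riemannian (full-rank) case of the canonical structural equations
(`C₁ = 0`, `C₂ = Iₙ`): for the solution of `Ȧ = −C`, `Ḃ = −D`, `Ċ = R(t)A`, `Ḋ = R(t)B`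
with `A(0) = D(0) = Iₙ`, `B(0) = C(0) = 0`, the matrix `B(t)` is invertible for all small
`t > 0` and `d/dt (B(t)⁻¹A(t)) = (1/t²)Iₙ + (1/3)R(0) + O(t)` as `t → 0⁺`. -/
theorem riemannian_Q0_is_third_of_curvature (n : ℕ) (hn : 1 ≤ n)
    (R A B C D : ℝ → Matrix (Fin n) (Fin n) ℝ)
    (hRsmooth : ∀ i j, ContDiff ℝ (⊤ : ℕ∞) fun t => R t i j)
    (hRsymm : ∀ t, (R t)ᵀ = R t)
    (hA0 : A 0 = 1) (hB0 : B 0 = 0) (hC0 : C 0 = 0) (hD0 : D 0 = 1)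
    (hA : ∀ t i j, HasDerivAt (fun s => A s i j) ((-(C t)) i j) t)
    (hB : ∀ t i j, HasDerivAt (fun s => B s i j) ((-(D t)) i j) t)
    (hC : ∀ t i j, HasDerivAt (fun s => C s i j) ((R t * A t) i j) t)
    (hD : ∀ t i j, HasDerivAt (fun s => D s i j) ((R t * B t) i j) t) :
    (∃ ε > (0:ℝ), ∀ t ∈ Set.Ioo 0 ε, IsUnit (B t)) ∧
    ∀ i j : Fin n,
      (fun t : ℝ =>
        deriv (fun s => ((B s)⁻¹ * A s) i j) t
          - ((1/t^2) * (1 : Matrix (Fin n) (Fin n) ℝ) i j + (1/3) * R 0 i j))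
        =O[𝓝[>] 0] fun t : ℝ => t := by
  have hRdiff : ∀ i j, DifferentiableAt ℝ (fun t ↦ R t i j) 0 := fun i j ↦
    (hRsmooth i j).differentiable (by simp) 0
  open scoped Matrix.Norms.Operator in
  obtain ⟨hreg, hO⟩ := riemannian_Q0_is_third_of_curvature_general
    (by simpa using isBigO_sub_of_differentiableAt_entry hRdiff)
    (isJacobiPair_of_hasDerivAt_entry hA hC) (isJacobiPair_of_hasDerivAt_entry hB hD)
    hA0 hB0 hC0 hD0
  simp only [← nonsing_inv_eq_ringInverse] at hreg hO
  have hle : 𝓝[>] (0 : ℝ) ≤ 𝓝[≠] 0 := nhdsGT_le_nhdsNE 0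
  exact ⟨mem_nhdsGT_iff_exists_Ioo_subset.1 (hle (hreg.mono fun _ ↦ And.left)), fun i j ↦
    (isBigO_deriv_entry_sub (hreg.mono fun _ ↦ And.right) hO i j).mono hle⟩

end
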